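/- Let (X,d_X,μ_X) and (Y,d_Y,μ_Y) be metric measure spaces with μ_X and μ_Y σ-finite, such that (X,d_X,μ_X) satisfies the general inequality B̄M(1) and (Y,d_Y,μ_Y) satisfies BBL(p,m) for some m>0 and p ≥ −1/m. Let μ be the measure on X×Y given by dμ(x,y)=φ(x,y)dμ_{X×Y}(x,y) where φ is p-concave with respect to the product metric ρ. Let λ∈(0,1) and let A,B⊆X×Y be non-empty measurable sets such that (1−λ)A⋆λB is also measurable and sup_{x∈X} ∫_Y χ_A(x,y)φ(x,y)dμ_Y(y) = sup_{x∈X} ∫_Y χ_B(x,y)φ(x,y)dμ_Y(y). Then μ((1−λ)A⋆λB) ≥ (1−λ)μ(A) + λμ(B). -/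

import Mathlib

open MeasureTheory Set Metric Filter
open scoped ENNReal NNReal Topology Pointwise

noncomputable section

/-- The `d`-convex combination `(1-λ)A ⋆_d λB` of two sets. -/
def starComb {Z : Type*} (d : Z → Z → ℝ) (lam : ℝ) (A B : Set Z) : Set Z :=
  {z | ∃ a ∈ A, ∃ b ∈ B, d z a = lam * d a b ∧ d z b = (1 - lam) * d a b}

/-- A distance is strictly intrinsic: closed balls of radii summing to the distance
between their centers intersect. -/
def StrictlyIntrinsicDist {Z : Type*} (d : Z → Z → ℝ) : Prop :=
  ∀ x y : Z, ∀ r₁ r₂ : ℝ, 0 ≤ r₁ → 0 ≤ r₂ → r₁ + r₂ = d x y →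
    ∃ z : Z, d z x ≤ r₁ ∧ d z y ≤ r₂

/-- The ℓ² (Euclidean) product metric on `X × Y`. -/
def rho {X Y : Type*} [PseudoMetricSpace X] [PseudoMetricSpace Y] (a b : X × Y) : ℝ :=
  Real.sqrt (dist a.1 b.1 ^ 2 + dist a.2 b.2 ^ 2)

/-- The ℓ² (Euclidean) metric on a finite product of copies of a metric space. -/
def rhoPi {ι : Type*} [Fintype ι] {X : Type*} [PseudoMetricSpace X] (a b : ι → X) : ℝ :=
  Real.sqrt (∑ i, dist (a i) (b i) ^ 2)

open Classical in
/-- The `p`-th mean `M_p(a,b,λ)` of `a, b ∈ [0,∞]`, for `p ∈ ℝ ∪ {±∞}`, with the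
convention that it vanishes whenever `a * b = 0`. -/
def Mp (p : EReal) (lam : ℝ) (a b : ℝ≥0∞) : ℝ≥0∞ :=
  if a = 0 ∨ b = 0 then 0
  else if p = ⊤ then max a b
  else if p = ⊥ then min a b
  else if p = 0 then a ^ (1 - lam) * b ^ lam
  else (ENNReal.ofReal (1 - lam) * a ^ p.toReal + ENNReal.ofReal lam * b ^ p.toReal) ^ (1 / p.toReal)

open Classical in
/-- The `p`-th mean `M_p(a,b,λ)` of nonnegative reals, with the zero convention. -/
def MpR (p : EReal) (lam a b : ℝ) : ℝ :=
  if a = 0 ∨ b = 0 then 0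
  else if p = ⊤ then max a b
  else if p = ⊥ then min a b
  else if p = 0 then a ^ (1 - lam) * b ^ lam
  else ((1 - lam) * a ^ p.toReal + lam * b ^ p.toReal) ^ (1 / p.toReal)

/-- `(X,d,μ)` satisfies `BM(p)`. -/
def SatisfiesBM {X : Type*} [MeasurableSpace X] (d : X → X → ℝ) (μ : Measure X)
    (p : EReal) : Prop :=
  ∀ lam : ℝ, lam ∈ Ioo (0:ℝ) 1 → ∀ A B C : Set X, A.Nonempty → B.Nonempty →
    MeasurableSet A → MeasurableSet B → MeasurableSet C →
    μ A ≠ 0 → μ B ≠ 0 → starComb d lam A B ⊆ C →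
    Mp p lam (μ A) (μ B) ≤ μ C

/-- `(X,d,μ)` satisfies the general (linear) inequality `B̄M(1)`:
`μ(C) ≥ (1-λ)μ(A) + λμ(B)` for all nonempty measurable `A, B, C` with
`C ⊇ (1-λ)A ⋆ λB`. -/
def SatisfiesBMbarLinear {X : Type*} [MeasurableSpace X] (d : X → X → ℝ)
    (μ : Measure X) : Prop :=
  ∀ lam : ℝ, lam ∈ Ioo (0:ℝ) 1 → ∀ A B C : Set X, A.Nonempty → B.Nonempty →
    MeasurableSet A → MeasurableSet B → MeasurableSet C →
    starComb d lam A B ⊆ C →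
    ENNReal.ofReal (1 - lam) * μ A + ENNReal.ofReal lam * μ B ≤ μ C

/-- `(X,d,μ)` satisfies the general inequality `B̄M(p)` for a real `p > 0`:
`μ(C) ≥ ((1-λ)μ(A)^p + λμ(B)^p)^{1/p}` for all nonempty measurable `A, B, C`
with `C ⊇ (1-λ)A ⋆ λB`. -/
def SatisfiesBMbarPos {X : Type*} [MeasurableSpace X] (d : X → X → ℝ) (μ : Measure X)
    (p : ℝ) : Prop :=
  ∀ lam : ℝ, lam ∈ Ioo (0:ℝ) 1 → ∀ A B C : Set X, A.Nonempty → B.Nonempty →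
    MeasurableSet A → MeasurableSet B → MeasurableSet C →
    starComb d lam A B ⊆ C →
    (ENNReal.ofReal (1 - lam) * μ A ^ p + ENNReal.ofReal lam * μ B ^ p) ^ (1/p) ≤ μ C

/-- `(X,d,μ)` satisfies the weighted inequality `BM(p,q)`:
`μ(C)^p ≥ (1-λ)^q μ(A)^p + λ^q μ(B)^p` for all nonempty measurable sets of positive
measure with `C ⊇ (1-λ)A ⋆ λB`. -/
def SatisfiesBMW {X : Type*} [MeasurableSpace X] (d : X → X → ℝ) (μ : Measure X)
    (p q : ℝ) : Prop :=
  ∀ lam : ℝ, lam ∈ Ioo (0:ℝ) 1 → ∀ A B C : Set X, A.Nonempty → B.Nonempty →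
    MeasurableSet A → MeasurableSet B → MeasurableSet C →
    μ A ≠ 0 → μ B ≠ 0 → starComb d lam A B ⊆ C →
    ENNReal.ofReal ((1 - lam) ^ q) * μ A ^ p + ENNReal.ofReal (lam ^ q) * μ B ^ p ≤ μ C ^ p

/-- `(X,d,μ)` satisfies the Prékopa–Leindler inequality `PL`. -/
def SatisfiesPL {X : Type*} [MeasurableSpace X] (d : X → X → ℝ) (μ : Measure X) : Prop :=
  ∀ lam : ℝ, lam ∈ Ioo (0:ℝ) 1 → ∀ f g h : X → ℝ≥0∞,
    Measurable f → Measurable g → Measurable h →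
    (∀ x y z : X, d z x = lam * d x y → d z y = (1 - lam) * d x y →
      f x ^ (1 - lam) * g y ^ lam ≤ h z) →
    (∫⁻ x, f x ∂μ) ^ (1 - lam) * (∫⁻ x, g x ∂μ) ^ lam ≤ ∫⁻ x, h x ∂μ

open Classical in
/-- `(X,d,μ)` satisfies the Borell–Brascamp–Lieb inequality `BBL(p,m)`. -/
def SatisfiesBBL {X : Type*} [MeasurableSpace X] (d : X → X → ℝ) (μ : Measure X)
    (p m : ℝ) : Prop :=
  ∀ lam : ℝ, lam ∈ Ioo (0:ℝ) 1 → ∀ f g h : X → ℝ≥0∞,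
    Measurable f → Measurable g → Measurable h →
    (∀ x y z : X, d z x = lam * d x y → d z y = (1 - lam) * d x y →
      Mp (p : EReal) lam (f x) (g y) ≤ h z) →
    Mp (if m * p + 1 = 0 then (⊥ : EReal) else ((p / (m * p + 1) : ℝ) : EReal)) lam
      (∫⁻ x, f x ∂μ) (∫⁻ x, g x ∂μ) ≤ ∫⁻ x, h x ∂μ

/-- `φ : ℝ → ℝ` is positively decreasing: `t ↦ φ(t)` and `t ↦ φ(-t)` are
non-increasing on `[0,∞)`. -/
def PositivelyDecreasing (φ : ℝ → ℝ) : Prop :=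
  (∀ s t : ℝ, 0 ≤ s → s ≤ t → φ t ≤ φ s) ∧ (∀ s t : ℝ, 0 ≤ s → s ≤ t → φ (-t) ≤ φ (-s))

/-- A set `A ⊆ ℝⁿ` is weakly unconditional. -/
def WeaklyUnconditional {n : ℕ} (A : Set (Fin n → ℝ)) : Prop :=
  ∀ x ∈ A, ∀ ε : Fin n → ℝ, (∀ i, ε i = 0 ∨ ε i = 1) → (fun i => ε i * x i) ∈ A

/-- A nonnegative function on a real vector space is `p`-concave. -/
def PConcaveFn {E : Type*} [AddCommGroup E] [Module ℝ E] (p : EReal) (φ : E → ℝ) : Prop :=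
  ∀ x y : E, ∀ lam : ℝ, lam ∈ Ioo (0:ℝ) 1 →
    MpR p lam (φ x) (φ y) ≤ φ ((1 - lam) • x + lam • y)

/-- A function on a real vector space is radially decreasing. -/
def RadiallyDecreasing {E : Type*} [AddCommGroup E] [Module ℝ E] (φ : E → ℝ) : Prop :=
  ∀ x : E, ∀ t : ℝ, t ∈ Icc (0:ℝ) 1 → φ x ≤ φ (t • x)

/-!
Put `C = (1-λ)A ⋆ λB` and slice `X × Y` over `X`. If `z` lies between `x₁` and `x₂`, then `BBL(p,m)`
on `Y`, applied to the sections of `χ_A φ`, `χ_B φ` and `χ_C φ` over `x₁`, `x₂` and `z`, bounds the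
section integral of `C` over `z` below by a mean of those of `A` over `x₁` and `B` over `x₂`, hence
by their minimum. So the set where the section integral of `C` exceeds `t` contains the convex
combination of the corresponding sets for `A` and `B`. The suprema of the section integrals agree,
so these two sets are empty for the same values of `t`, and `B̄M(1)` on `X` applies at every level
where they are not. Integrating over `t` gives the theorem.
-/

section Means

theorem ennreal_rpow_le_rpow_of_nonpos {a b : ℝ≥0∞} {s : ℝ} (hab : a ≤ b) (hs : s ≤ 0) :
    b ^ s ≤ a ^ s := by
  rw [← neg_neg s, ENNReal.rpow_neg, ENNReal.rpow_neg a]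
  exact ENNReal.inv_le_inv.mpr (ENNReal.rpow_le_rpow hab (neg_nonneg.mpr hs))

theorem min_le_rpow_mul_rpow {s t : ℝ} (hs : 0 ≤ s) (ht : 0 ≤ t) (hst : s + t = 1)
    (a b : ℝ≥0∞) : min a b ≤ a ^ s * b ^ t :=
  calc min a b = min a b ^ s * min a b ^ t := by
        rw [← ENNReal.rpow_add_of_nonneg _ _ hs ht, hst, ENNReal.rpow_one]
    _ ≤ a ^ s * b ^ t :=
        mul_le_mul' (ENNReal.rpow_le_rpow (min_le_left a b) hs)
          (ENNReal.rpow_le_rpow (min_le_right a b) ht)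

theorem min_le_weighted_rpow_mean {v w : ℝ≥0∞} (hvw : v + w = 1) {r : ℝ} (hr : r ≠ 0)
    (a b : ℝ≥0∞) : min a b ≤ (v * a ^ r + w * b ^ r) ^ (1 / r) := by
  have hpow : (min a b ^ r) ^ (1 / r) = min a b := by
    rw [← ENNReal.rpow_mul, mul_one_div_cancel hr, ENNReal.rpow_one]
  have hsplit : v * min a b ^ r + w * min a b ^ r = min a b ^ r := by
    rw [← add_mul, hvw, one_mul]
  rw [← hpow, ← hsplit]
  rcases hr.lt_or_gt with hneg | hpos
  · refine ennreal_rpow_le_rpow_of_nonpos ?_ (one_div_neg.mpr hneg).le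
    gcongr v * ?_ + w * ?_
    · exact ennreal_rpow_le_rpow_of_nonpos (min_le_left a b) hneg.le
    · exact ennreal_rpow_le_rpow_of_nonpos (min_le_right a b) hneg.le
  · gcongr
    · exact min_le_left a b
    · exact min_le_right a b

theorem min_le_Mp (q : EReal) {lam : ℝ} (hlam : lam ∈ Icc (0 : ℝ) 1) (a b : ℝ≥0∞) :
    min a b ≤ Mp q lam a b := by
  have hlam' : 0 ≤ 1 - lam := sub_nonneg.mpr hlam.2
  unfold Mp
  split_ifs with hzero htop hbot hq
  · rcases hzero with rfl | rfl <;> simp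
  · exact min_le_max
  · exact le_rfl
  · exact min_le_rpow_mul_rpow hlam' hlam.1 (sub_add_cancel 1 lam) a b
  · have hweights : ENNReal.ofReal (1 - lam) + ENNReal.ofReal lam = 1 := by
      rw [← ENNReal.ofReal_add hlam' hlam.1, sub_add_cancel, ENNReal.ofReal_one]
    have hr : q.toReal ≠ 0 := by simp [EReal.toReal_eq_zero_iff, htop, hbot, hq]
    exact min_le_weighted_rpow_mean hweights hr a b

theorem Mp_bot (lam : ℝ) (a b : ℝ≥0∞) : Mp ⊥ lam a b = min a b := by
  by_cases hzero : a = 0 ∨ b = 0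
  · rcases hzero with rfl | rfl <;> simp [Mp]
  · simp [Mp, hzero]

end Means

section LayerCake

theorem volume_Ioi_inter_ofReal_lt (a : ℝ≥0∞) :
    volume (Ioi 0 ∩ {t : ℝ | ENNReal.ofReal t < a}) = a := by
  rcases eq_or_ne a ⊤ with rfl | ha
  · simp
  · have hset : Ioi 0 ∩ {t : ℝ | ENNReal.ofReal t < a} = Ioo 0 a.toReal := by
      ext t
      exact and_congr_right fun ht => ENNReal.ofReal_lt_iff_lt_toReal (le_of_lt ht) ha
    rw [hset, Real.volume_Ioo, sub_zero, ENNReal.ofReal_toReal ha]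

theorem lintegral_eq_lintegral_measure_ofReal_lt {X : Type*} [MeasurableSpace X] (μ : Measure X)
    [SFinite μ] {f : X → ℝ≥0∞} (hf : Measurable f) :
    ∫⁻ x, f x ∂μ = ∫⁻ t in Ioi (0 : ℝ), μ {x | ENNReal.ofReal t < f x} := by
  let subgraph : Set (X × ℝ) := {q | ENNReal.ofReal q.2 < f q.1}
  have hsubgraph : MeasurableSet subgraph := measurableSet_lt (by fun_prop) (by fun_prop)
  have hsection (x : X) : volume.restrict (Ioi 0) (Prod.mk x ⁻¹' subgraph) = f x := by
    rw [Measure.restrict_apply (measurable_prodMk_left hsubgraph), inter_comm]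
    exact volume_Ioi_inter_ofReal_lt (f x)
  calc ∫⁻ x, f x ∂μ = ∫⁻ x, volume.restrict (Ioi 0) (Prod.mk x ⁻¹' subgraph) ∂μ := by
        simp only [hsection]
    _ = (μ.prod (volume.restrict (Ioi 0))) subgraph := (Measure.prod_apply hsubgraph).symm
    _ = ∫⁻ t in Ioi (0 : ℝ), μ {x | ENNReal.ofReal t < f x} :=
        Measure.prod_apply_symm hsubgraph

end LayerCake

/-- `h` majorizes the `p`-th means of `f` and `g` along `d`: `M_p(f(x), g(y), λ) ≤ h(z)` for all
`z ∈ (1-λ){x} ⋆_d λ{y}`. This is the hypothesis on `f, g, h` in `BBL(p,m)`, and `φ` is `p`-concave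
when `f = g = h = φ` satisfies it for every `λ ∈ (0,1)`. -/
def IsMeanMajorant {Z : Type*} (d : Z → Z → ℝ) (p : EReal) (lam : ℝ) (f g h : Z → ℝ≥0∞) : Prop :=
  ∀ x y z : Z, d z x = lam * d x y → d z y = (1 - lam) * d x y → Mp p lam (f x) (g y) ≤ h z

namespace IsMeanMajorant

variable {Z : Type*} {d : Z → Z → ℝ} {p : EReal} {lam : ℝ} {f g h : Z → ℝ≥0∞}

theorem indicator (hfgh : IsMeanMajorant d p lam f g h) {A B C : Set Z}
    (hC : starComb d lam A B ⊆ C) :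
    IsMeanMajorant d p lam (A.indicator f) (B.indicator g) (C.indicator h) := by
  intro x y z hzx hzy
  by_cases hx : x ∈ A
  · by_cases hy : y ∈ B
    · have hz : z ∈ C := hC ⟨x, hx, y, hy, hzx, hzy⟩
      simpa only [indicator_of_mem, hx, hy, hz] using hfgh x y z hzx hzy
    · simp [Mp, hy]
  · simp [Mp, hx]

theorem starComb_superlevel_subset (hfgh : IsMeanMajorant d ⊥ lam f g h) (t : ℝ≥0∞) :
    starComb d lam {x | t < f x} {y | t < g y} ⊆ {z | t < h z} := by
  rintro z ⟨x, hx, y, hy, hzx, hzy⟩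
  have hmin : min (f x) (g y) ≤ h z := Mp_bot lam (f x) (g y) ▸ hfgh x y z hzx hzy
  exact (lt_min hx hy).trans_le hmin

end IsMeanMajorant

namespace SatisfiesBMbarLinear

variable {X : Type*} [MeasurableSpace X] {d : X → X → ℝ} {μ : Measure X} {lam : ℝ}
  {f g h : X → ℝ≥0∞}

theorem add_measure_superlevel_le (hX : SatisfiesBMbarLinear d μ) (hlam : lam ∈ Ioo (0 : ℝ) 1)
    (hf : Measurable f) (hg : Measurable g) (hh : Measurable h)
    (hfgh : IsMeanMajorant d ⊥ lam f g h) (hsup : ⨆ x, f x = ⨆ x, g x) (t : ℝ≥0∞) :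
    ENNReal.ofReal (1 - lam) * μ {x | t < f x} + ENNReal.ofReal lam * μ {x | t < g x}
      ≤ μ {x | t < h x} := by
  rcases lt_or_ge t (⨆ x, f x) with ht | ht
  · have hf_ne : {x | t < f x}.Nonempty := lt_iSup_iff.mp ht
    have hg_ne : {x | t < g x}.Nonempty := lt_iSup_iff.mp (ht.trans_eq hsup)
    exact hX lam hlam _ _ _ hf_ne hg_ne
      (measurableSet_lt measurable_const hf) (measurableSet_lt measurable_const hg)
      (measurableSet_lt measurable_const hh) (hfgh.starComb_superlevel_subset t)
  · have hf_le (x : X) : f x ≤ t := (le_iSup f x).trans ht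
    have hg_le (x : X) : g x ≤ t := (le_iSup g x).trans (hsup ▸ ht)
    simp [(hf_le _).not_gt, (hg_le _).not_gt]

theorem add_lintegral_le [SFinite μ] (hX : SatisfiesBMbarLinear d μ)
    (hlam : lam ∈ Ioo (0 : ℝ) 1) (hf : Measurable f) (hg : Measurable g) (hh : Measurable h)
    (hfgh : IsMeanMajorant d ⊥ lam f g h) (hsup : ⨆ x, f x = ⨆ x, g x) :
    ENNReal.ofReal (1 - lam) * ∫⁻ x, f x ∂μ + ENNReal.ofReal lam * ∫⁻ x, g x ∂μ
      ≤ ∫⁻ x, h x ∂μ := by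
  simp only [lintegral_eq_lintegral_measure_ofReal_lt μ, hf, hg, hh]
  rw [← lintegral_const_mul' _ _ ENNReal.ofReal_ne_top,
    ← lintegral_const_mul' _ _ ENNReal.ofReal_ne_top]
  exact (le_lintegral_add _ _).trans <| lintegral_mono fun t =>
    hX.add_measure_superlevel_le hlam hf hg hh hfgh hsup (ENNReal.ofReal t)

end SatisfiesBMbarLinear

section Product

variable {X Y : Type*} [PseudoMetricSpace X] [PseudoMetricSpace Y]

theorem rho_eq_mul_of_dist_eq_mul {s : ℝ} (hs : 0 ≤ s) {a b a' b' : X × Y}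
    (hfst : dist a.1 b.1 = s * dist a'.1 b'.1) (hsnd : dist a.2 b.2 = s * dist a'.2 b'.2) :
    rho a b = s * rho a' b' := by
  unfold rho
  rw [hfst, hsnd, mul_pow, mul_pow, ← mul_add, Real.sqrt_mul (sq_nonneg s), Real.sqrt_sq hs]

theorem IsMeanMajorant.comp_prodMk {p : EReal} {lam : ℝ} (hlam : lam ∈ Icc (0 : ℝ) 1)
    {f g h : X × Y → ℝ≥0∞} (hfgh : IsMeanMajorant rho p lam f g h) {x₁ x₂ z : X}
    (hz₁ : dist z x₁ = lam * dist x₁ x₂) (hz₂ : dist z x₂ = (1 - lam) * dist x₁ x₂) :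
    IsMeanMajorant dist p lam (fun y => f (x₁, y)) (fun y => g (x₂, y)) (fun y => h (z, y)) :=
  fun _ _ _ hw₁ hw₂ => hfgh _ _ _ (rho_eq_mul_of_dist_eq_mul hlam.1 hz₁ hw₁)
    (rho_eq_mul_of_dist_eq_mul (sub_nonneg.mpr hlam.2) hz₂ hw₂)

variable [MeasurableSpace X] [MeasurableSpace Y] {μX : Measure X} {μY : Measure Y}
  {m p lam : ℝ}

theorem SatisfiesBBL.isMeanMajorant_lintegral_section (hY : SatisfiesBBL dist μY p m)
    (hlam : lam ∈ Ioo (0 : ℝ) 1) {f g h : X × Y → ℝ≥0∞} (hf : Measurable f) (hg : Measurable g)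
    (hh : Measurable h) (hfgh : IsMeanMajorant rho p lam f g h) :
    IsMeanMajorant dist ⊥ lam (fun x => ∫⁻ y, f (x, y) ∂μY) (fun x => ∫⁻ y, g (x, y) ∂μY)
      (fun x => ∫⁻ y, h (x, y) ∂μY) := by
  intro x₁ x₂ z hz₁ hz₂
  rw [Mp_bot]
  exact (min_le_Mp _ (Ioo_subset_Icc_self hlam) _ _).trans <|
    hY lam hlam _ _ _ (hf.comp measurable_prodMk_left) (hg.comp measurable_prodMk_left)
      (hh.comp measurable_prodMk_left) (hfgh.comp_prodMk (Ioo_subset_Icc_self hlam) hz₁ hz₂)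

theorem SatisfiesBMbarLinear.add_lintegral_prod_le [SFinite μX] [SFinite μY]
    (hX : SatisfiesBMbarLinear dist μX) (hY : SatisfiesBBL dist μY p m)
    (hlam : lam ∈ Ioo (0 : ℝ) 1) {f g h : X × Y → ℝ≥0∞} (hf : Measurable f) (hg : Measurable g)
    (hh : Measurable h) (hfgh : IsMeanMajorant rho p lam f g h)
    (hsup : ⨆ x, ∫⁻ y, f (x, y) ∂μY = ⨆ x, ∫⁻ y, g (x, y) ∂μY) :
    ENNReal.ofReal (1 - lam) * ∫⁻ z, f z ∂μX.prod μY + ENNReal.ofReal lam * ∫⁻ z, g z ∂μX.prod μY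
      ≤ ∫⁻ z, h z ∂μX.prod μY := by
  rw [lintegral_prod f hf.aemeasurable, lintegral_prod g hg.aemeasurable,
    lintegral_prod h hh.aemeasurable]
  exact hX.add_lintegral_le hlam hf.lintegral_prod_right' hg.lintegral_prod_right'
    hh.lintegral_prod_right' (hY.isMeanMajorant_lintegral_section hlam hf hg hh hfgh) hsup

end Product

theorem setLIntegral_section_eq_lintegral_indicator {X Y : Type*} [MeasurableSpace X]
    [MeasurableSpace Y] (ν : Measure Y) (φ : X × Y → ℝ≥0∞) {A : Set (X × Y)}
    (hA : MeasurableSet A) (x : X) :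
    ∫⁻ y in {y : Y | (x, y) ∈ A}, φ (x, y) ∂ν = ∫⁻ y, A.indicator φ (x, y) ∂ν :=
  (lintegral_indicator (measurable_prodMk_left hA) _).symm

theorem statement18_general {X Y : Type*} [PseudoMetricSpace X] [PseudoMetricSpace Y]
    [MeasurableSpace X] [MeasurableSpace Y] {μX : Measure X} {μY : Measure Y}
    [SFinite μX] [SFinite μY] {m p lam : ℝ} (hlam : lam ∈ Ioo (0 : ℝ) 1)
    (hX : SatisfiesBMbarLinear dist μX) (hY : SatisfiesBBL dist μY p m)
    {φ : X × Y → ℝ≥0∞} (hφ : Measurable φ) (hφconc : IsMeanMajorant rho p lam φ φ φ)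
    {A B C : Set (X × Y)} (hA : MeasurableSet A) (hB : MeasurableSet B) (hC : MeasurableSet C)
    (hABC : starComb rho lam A B ⊆ C)
    (hsup : (⨆ x : X, ∫⁻ y in {y : Y | (x, y) ∈ A}, φ (x, y) ∂μY)
      = ⨆ x : X, ∫⁻ y in {y : Y | (x, y) ∈ B}, φ (x, y) ∂μY) :
    ENNReal.ofReal (1 - lam) * (μX.prod μY).withDensity φ A
        + ENNReal.ofReal lam * (μX.prod μY).withDensity φ B
      ≤ (μX.prod μY).withDensity φ C := by
  simp only [setLIntegral_section_eq_lintegral_indicator μY φ, hA, hB] at hsup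
  simp only [withDensity_apply φ, ← lintegral_indicator, hA, hB, hC]
  exact hX.add_lintegral_prod_le hY hlam (hφ.indicator hA) (hφ.indicator hB) (hφ.indicator hC)
    (hφconc.indicator hABC) hsup

/-- Theorem `t:BM_lin2_MetSpa`: linear Brunn–Minkowski inequality on
`X × Y` for a `p`-concave density, when `X` satisfies `B̄M(1)`, `Y` satisfies `BBL(p,m)`,
and the two sets have equal maximal "marginal" sections. -/
theorem statement18 {X Y : Type*} [MetricSpace X] [MetricSpace Y]
    [MeasurableSpace X] [OpensMeasurableSpace X] [MeasurableSpace Y] [OpensMeasurableSpace Y]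
    (μX : Measure X) (μY : Measure Y) [SigmaFinite μX] [SigmaFinite μY]
    (hdX : StrictlyIntrinsicDist (dist : X → X → ℝ))
    (hdY : StrictlyIntrinsicDist (dist : Y → Y → ℝ))
    (m p : ℝ) (hm : 0 < m) (hp : -1/m ≤ p)
    (hX : SatisfiesBMbarLinear (dist : X → X → ℝ) μX)
    (hYBBL : SatisfiesBBL (dist : Y → Y → ℝ) μY p m)
    (φ : X × Y → ℝ≥0∞) (hφmeas : Measurable φ)
    (hφconc : ∀ lam : ℝ, lam ∈ Ioo (0:ℝ) 1 → ∀ x y z : X × Y,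
      rho z x = lam * rho x y → rho z y = (1 - lam) * rho x y →
      Mp (p : EReal) lam (φ x) (φ y) ≤ φ z)
    (μ : Measure (X × Y)) (hμ : μ = (μX.prod μY).withDensity φ)
    (lam : ℝ) (hlam : lam ∈ Ioo (0:ℝ) 1)
    (A B : Set (X × Y)) (hA : A.Nonempty) (hB : B.Nonempty)
    (hAm : MeasurableSet A) (hBm : MeasurableSet B)
    (hCm : MeasurableSet (starComb (rho : X × Y → X × Y → ℝ) lam A B))
    (hsup : (⨆ x : X, ∫⁻ y in {y : Y | (x, y) ∈ A}, φ (x, y) ∂μY)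
          = ⨆ x : X, ∫⁻ y in {y : Y | (x, y) ∈ B}, φ (x, y) ∂μY) :
    ENNReal.ofReal (1 - lam) * μ A + ENNReal.ofReal lam * μ B
      ≤ μ (starComb (rho : X × Y → X × Y → ℝ) lam A B) := by
  subst hμ
  exact statement18_general hlam hX hYBBL hφmeas (hφconc lam hlam) hAm hBm hCm Subset.rfl hsup

end
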